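/- arXiv:1302.1631 — 4 statements merged into one kernel-verified Lean document; each statement's English description precedes it below -/
import Mathlib

section
/- Let n be a positive integer and let h₃(z) = S_{3n}(z) − S_{3n−1}(z) − (3 + (z²−4)·S_{n−1}(z)²)·(S_n(z) − S_{n−1}(z)). Then h₃ is a polynomial in z of degree n, it has exactly n distinct complex roots (i.e., h₃ has no multiple roots), and none of its roots equals 2 or −2. -/
open Polynomial

/-!
The polynomial in question is `-C n`, where `C n` is the rescaled Chebyshev polynomial of the first
kind, `C n (z + z⁻¹) = z ^ n + z⁻¹ ^ n`. The product formula `C m * S k = S (k + m) + S (k - m)`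
expands `C n ^ 2 * S k` for `k = n` and `k = n - 1`, so that
`S (3 n) - S (3 n - 1) = (C n ^ 2 - 1) * (S n - S (n - 1)) - C n`, and the factor `C n ^ 2 - 1` is
eliminated by the Pell equation `C n ^ 2 - (X ^ 2 - 4) * S (n - 1) ^ 2 = 4`.
Since the derivative of `C n` is `n * S (n - 1)`, the Pell equation also shows that `C n` is coprime
to its derivative as soon as `2` and `n` are invertible; and `C n` takes the values `±2` at `±2`.
-/

section CommRing

variable {R : Type*} [CommRing R]

theorem eq_chebyshev_S_of_recurrence {S : ℤ → R[X]} (h0 : S 0 = 1) (h1 : S 1 = X)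
    (hrec : ∀ j : ℤ, S (j + 1) = X * S j - S (j - 1)) (j : ℤ) : S j = Chebyshev.S R j := by
  induction j using Chebyshev.induct with
  | zero => simp [h0]
  | one => simp [h1]
  | add_two j ih1 ih2 =>
    have h := hrec (j + 1)
    rw [add_assoc, add_sub_cancel_right] at h
    exact h.trans (by rw [ih1, ih2, Chebyshev.S_add_two])
  | neg_add_one j ih1 ih2 =>
    rw [Chebyshev.S_sub_one, ← ih1, ← ih2, hrec, sub_sub_cancel]

variable (R)

theorem chebyshev_C_mul_S (m k : ℤ) :
    Chebyshev.C R m * Chebyshev.S R k = Chebyshev.S R (k + m) + Chebyshev.S R (k - m) := by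
  induction m using Chebyshev.induct with
  | zero => simp [two_mul]
  | one => rw [Chebyshev.C_one, Chebyshev.S_add_one, sub_add_cancel]
  | add_two m ih1 ih2 =>
    have hC := Chebyshev.C_add_two R m
    have hadd := Chebyshev.S_add_two R (k + m)
    have hsub := Chebyshev.S_sub_two R (k - m)
    linear_combination (norm := ring_nf)
      Chebyshev.S R k * hC - hadd - hsub + (X : R[X]) * ih1 - ih2
  | neg_add_one m ih1 ih2 =>
    have hC := Chebyshev.C_sub_one R (-m)
    have hadd := Chebyshev.S_add_one R (k + m)
    have hsub := Chebyshev.S_sub_one R (k - m)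
    linear_combination (norm := ring_nf)
      Chebyshev.S R k * hC - hadd - hsub + (X : R[X]) * ih1 - ih2

theorem chebyshev_S_three_mul (n : ℤ) :
    Chebyshev.S R (3 * n) = (Chebyshev.C R n ^ 2 - 1) * Chebyshev.S R n - Chebyshev.C R n := by
  have h0 := chebyshev_C_mul_S R n 0
  have h1 := chebyshev_C_mul_S R n n
  have h2 := chebyshev_C_mul_S R n (n + n)
  rw [Chebyshev.S_zero, mul_one, zero_add, zero_sub] at h0
  rw [sub_self, Chebyshev.S_zero] at h1
  rw [add_sub_cancel_right, show n + n + n = 3 * n by ring] at h2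
  linear_combination -h2 - Chebyshev.C R n * h1

theorem chebyshev_S_three_mul_sub_one (n : ℤ) :
    Chebyshev.S R (3 * n - 1) = (Chebyshev.C R n ^ 2 - 1) * Chebyshev.S R (n - 1) := by
  have h1 := chebyshev_C_mul_S R n (n - 1)
  have h2 := chebyshev_C_mul_S R n (n - 1 + n)
  rw [sub_sub_cancel_left, Chebyshev.S_neg_one, add_zero] at h1
  rw [add_sub_cancel_right, show n - 1 + n + n = 3 * n - 1 by ring] at h2
  linear_combination -h2 - Chebyshev.C R n * h1

theorem chebyshev_C_sq_sub_mul_S_sq (n : ℤ) :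
    Chebyshev.C R n ^ 2 - (X ^ 2 - 4) * Chebyshev.S R (n - 1) ^ 2 = 4 := by
  have h := Chebyshev.S_sq_add_S_sq R (n - 1)
  rw [sub_add_cancel] at h
  rw [Chebyshev.C_eq_S_sub_X_mul_S]
  linear_combination 4 * h

theorem chebyshev_S_three_mul_sub_eq_neg_C (n : ℤ) :
    Chebyshev.S R (3 * n) - Chebyshev.S R (3 * n - 1)
      - (3 + (X ^ 2 - 4) * Chebyshev.S R (n - 1) ^ 2) * (Chebyshev.S R n - Chebyshev.S R (n - 1))
      = -Chebyshev.C R n := by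
  rw [chebyshev_S_three_mul, chebyshev_S_three_mul_sub_one]
  linear_combination
    (Chebyshev.S R n - Chebyshev.S R (n - 1)) * chebyshev_C_sq_sub_mul_S_sq R n

theorem chebyshev_C_derivative_eq_S (n : ℤ) :
    derivative (Chebyshev.C R n) = n * Chebyshev.S R (n - 1) := by
  induction n using Chebyshev.induct with
  | zero => simp
  | one => simp
  | add_two n ih1 ih2 =>
    have hderiv := congr_arg derivative (Chebyshev.C_add_two R n)
    have hS := Chebyshev.S_sub_one R n
    have hC := Chebyshev.C_eq_S_sub_X_mul_S R (n + 1)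
    simp only [derivative_sub, derivative_mul, derivative_X] at hderiv
    linear_combination (norm := (push_cast; ring_nf))
      hderiv - ih2 + (X : R[X]) * ih1 + hC - n * hS
  | neg_add_one n ih1 ih2 =>
    have hderiv := congr_arg derivative (Chebyshev.C_sub_one R (-n))
    have hS := Chebyshev.S_sub_two R (-n)
    have hC := Chebyshev.C_eq_S_sub_X_mul_S R (-n)
    simp only [derivative_sub, derivative_mul, derivative_X] at hderiv
    linear_combination (norm := (push_cast; ring_nf))
      hderiv - ih2 + (X : R[X]) * ih1 + hC + (n + 1) * hS

theorem degree_chebyshev_C [NeZero (2 : R)] (n : ℤ) :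
    (Chebyshev.C R n).degree = n.natAbs := by
  have : Nontrivial R := nontrivial_of_ne 2 0 two_ne_zero
  induction n using Chebyshev.induct' with
  | zero =>
    rw [Chebyshev.C_zero, ← C_ofNat, degree_C two_ne_zero, Int.natAbs_zero, Nat.cast_zero]
  | one => simp
  | add_two n ih1 ih2 =>
    have hX : (X * Chebyshev.C R (n + 1)).degree = ↑(n + 2) := by
      rw [mul_comm, degree_mul_X, ih1]
      norm_cast
    rw [Chebyshev.C_add_two, degree_sub_eq_left_of_degree_lt]
    · rw [hX]; norm_cast
    · rw [hX, ih2]; norm_cast; lia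
  | neg n ih => simp [ih]

variable {R}

theorem isCoprime_chebyshev_C_S (h2 : IsUnit (2 : R)) (n : ℤ) :
    IsCoprime (Chebyshev.C R n) (Chebyshev.S R (n - 1)) := by
  have h4 : IsUnit (4 : R[X]) := by
    rw [← C_ofNat, isUnit_C, show (4 : R) = 2 * 2 by norm_num]
    exact h2.mul h2
  obtain ⟨u, hu⟩ := h4.exists_left_inv
  exact ⟨u * Chebyshev.C R n, -u * (X ^ 2 - 4) * Chebyshev.S R (n - 1), by
    linear_combination u * chebyshev_C_sq_sub_mul_S_sq R n + hu⟩

theorem separable_chebyshev_C (h2 : IsUnit (2 : R)) {n : ℤ} (hn : IsUnit (n : R)) :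
    (Chebyshev.C R n).Separable := by
  have hn' : IsUnit (n : R[X]) := by simpa using hn.map (C : R →+* R[X])
  rw [separable_def, chebyshev_C_derivative_eq_S, isCoprime_mul_unit_left_right hn']
  exact isCoprime_chebyshev_C_S h2 n

end CommRing

theorem card_toFinset_roots_of_separable {K : Type*} [Field K] [IsSepClosed K] [DecidableEq K]
    {p : K[X]} (hp : p.Separable) : p.roots.toFinset.card = p.natDegree := by
  rw [Multiset.toFinset_card_of_nodup (nodup_roots hp),
    (IsSepClosed.splits_of_separable p hp).natDegree_eq_card_roots]

theorem h3_distinct_roots_general {K : Type*} [Field K] [IsSepClosed K] [DecidableEq K]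
    [NeZero (2 : K)]
    (S : ℤ → K[X])
    (hS0 : S 0 = 1)
    (hS1 : S 1 = X)
    (hSrec : ∀ j : ℤ, S (j + 1) = X * S j - S (j - 1))
    (n : ℕ) (hn : (n : K) ≠ 0)
    (h₃ : K[X])
    (hh₃ : h₃ = S (3 * (n : ℤ)) - S (3 * (n : ℤ) - 1)
        - (3 + (X ^ 2 - 4) * S ((n : ℤ) - 1) ^ 2) * (S (n : ℤ) - S ((n : ℤ) - 1))) :
    h₃.degree = n ∧ Squarefree h₃ ∧ h₃.roots.toFinset.card = n ∧
      ∀ z : K, h₃.eval z = 0 → z ≠ 2 ∧ z ≠ -2 := by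
  obtain rfl : h₃ = -Chebyshev.C K n := by
    simp only [hh₃, eq_chebyshev_S_of_recurrence hS0 hS1 hSrec,
      chebyshev_S_three_mul_sub_eq_neg_C]
  have hdeg : (-Chebyshev.C K n).degree = n := by simp [degree_chebyshev_C]
  have hsep : (-Chebyshev.C K n).Separable := by
    rw [separable_def, derivative_neg, IsCoprime.neg_neg_iff]
    exact separable_chebyshev_C (isUnit_iff_ne_zero.mpr two_ne_zero) (by simpa using hn)
  refine ⟨hdeg, hsep.squarefree, ?_, ?_⟩
  · rw [card_toFinset_roots_of_separable hsep, natDegree_eq_of_degree_eq_some hdeg]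
  · intro z hz
    constructor <;> rintro rfl <;> simp [two_ne_zero] at hz

/-- For a positive integer `n`, the polynomial
`h₃ = S (3n) - S (3n-1) - (3 + (X² - 4) * S (n-1) ^ 2) * (S n - S (n-1))`
(where the `S j` are the Chebyshev-like polynomials with `S 0 = 1`, `S 1 = X`
and `S (j+1) = X * S j - S (j-1)`) has degree `n`, has no multiple roots,
has exactly `n` distinct complex roots, and none of its roots equals `2` or
`-2`. -/
theorem h3_distinct_roots
    (S : ℤ → Polynomial ℂ)
    (hS0 : S 0 = 1)
    (hS1 : S 1 = Polynomial.X)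
    (hSrec : ∀ j : ℤ, S (j + 1) = Polynomial.X * S j - S (j - 1))
    (n : ℕ) (hn : 1 ≤ n)
    (h₃ : Polynomial ℂ)
    (hh₃ : h₃ = S (3 * (n : ℤ)) - S (3 * (n : ℤ) - 1)
        - (3 + (Polynomial.X ^ 2 - 4) * S ((n : ℤ) - 1) ^ 2)
          * (S (n : ℤ) - S ((n : ℤ) - 1))) :
    h₃.degree = n ∧ Squarefree h₃ ∧ h₃.roots.toFinset.card = n ∧
      ∀ z : ℂ, h₃.eval z = 0 → z ≠ 2 ∧ z ≠ -2 :=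
  h3_distinct_roots_general S hS0 hS1 hSrec n (Nat.cast_ne_zero.mpr (by lia)) h₃ hh₃
end

section
/- Let n be a positive integer. The set of pairs (x,z) ∈ ℂ² satisfying both equations 4 + (z−2)(z+2−x²)·S_{n−1}(z)² = 1 and S_{3n}(z) − S_{3n−1}(z) − x²·(z−2)·S_{n−1}(z)²·(S_n(z) − S_{n−1}(z)) = 0 is finite and has exactly 2n elements. -/
/-!
Write `Cₙ` for the Vieta–Lucas polynomials `Chebyshev.C`, so that `Cₙ² - 4 = (z² - 4) Sₙ₋₁²`.
Modulo the first equation, `x² (z - 2) Sₙ₋₁² = Cₙ² - 1`, while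
`S₃ₙ - S₃ₙ₋₁ = (Cₙ² - 1) (Sₙ - Sₙ₋₁) - Cₙ`; hence the second equation becomes `Cₙ(z) = 0`. When this
holds, `(z² - 4) Sₙ₋₁² = -4`, and the first equation reduces to `z = 4x² - 2`. Since
`Cₙ(4x² - 2) = 2 T₂ₙ(x)`, the solutions are parametrised by the roots `x` of `T₂ₙ`. These are simple
because of the Pell equation `T₂ₙ² - (X² - 1) U₂ₙ₋₁² = 1` and the formula
`derivative T₂ₙ = 2n U₂ₙ₋₁`.
-/

open Polynomial

section Identities

variable {R : Type*} [CommRing R]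

lemma eq_eval_chebyshevS {s : ℤ → R} {z : R} (h0 : s 0 = 1) (h1 : s 1 = z)
    (hrec : ∀ j, s (j + 1) = z * s j - s (j - 1)) (j : ℤ) : s j = (Chebyshev.S R j).eval z := by
  induction j using Chebyshev.induct with
  | zero => simp [h0]
  | one => simp [h1]
  | add_two k ih1 ih0 =>
    have h := hrec (k + 1)
    rw [add_sub_cancel_right, add_assoc, one_add_one_eq_two] at h
    simp [h, ih1, ih0, Chebyshev.S_add_two]
  | neg_add_one k ih0 ih1 =>
    simp only [Chebyshev.S_sub_one, eval_sub, eval_mul, eval_X, ← ih0, ← ih1]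
    linear_combination hrec (-k)

variable (R)

lemma chebyshevS_mul_chebyshevC (m k : ℤ) :
    Chebyshev.S R m * Chebyshev.C R k = Chebyshev.S R (m + k) + Chebyshev.S R (m - k) := by
  induction k using Chebyshev.induct with
  | zero => simp [mul_two]
  | one =>
    rw [Chebyshev.C_one, Chebyshev.S_add_one]
    ring
  | add_two k ih1 ih0 =>
    have hadd := Chebyshev.S_add_two R (m + k)
    have hsub := Chebyshev.S_sub_two R (m - k)
    have hC := Chebyshev.C_add_two R k
    linear_combination (norm := ring_nf) Chebyshev.S R m * hC - hsub - hadd - ih0 + X * ih1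
  | neg_add_one k ih0 ih1 =>
    have hadd := Chebyshev.S_sub_one R (m - k)
    have hsub := Chebyshev.S_add_one R (m + k)
    have hC := Chebyshev.C_sub_one R (-k)
    linear_combination (norm := ring_nf) Chebyshev.S R m * hC - hsub - hadd - ih1 + X * ih0

lemma chebyshevC_sq_sub_four (n : ℤ) :
    Chebyshev.C R n ^ 2 - 4 = (X ^ 2 - 4) * Chebyshev.S R (n - 1) ^ 2 := by
  have hS := Chebyshev.S_sq_add_S_sq R (n - 1)
  rw [sub_add_cancel] at hS
  rw [Chebyshev.C_eq_S_sub_X_mul_S]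
  linear_combination 4 * hS

lemma chebyshevC_comp_four_mul_X_sq_sub_two (n : ℤ) :
    (Chebyshev.C R n).comp (4 * X ^ 2 - 2) = 2 * Chebyshev.T R (2 * n) := by
  have hC₂ : (Chebyshev.C R 2).comp (2 * X) = 4 * X ^ 2 - 2 := by
    rw [Chebyshev.C_comp_two_mul_X, Chebyshev.T_two]
    ring
  rw [← hC₂, ← comp_assoc, ← Chebyshev.C_mul, Chebyshev.C_comp_two_mul_X, mul_comm n]

lemma chebyshevS_three_mul_sub (n : ℤ) :
    Chebyshev.S R (3 * n) - Chebyshev.S R (3 * n - 1) =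
      (Chebyshev.C R n ^ 2 - 1) * (Chebyshev.S R n - Chebyshev.S R (n - 1)) - Chebyshev.C R n := by
  have h₃ := chebyshevS_mul_chebyshevC R (2 * n) n
  have h₃' := chebyshevS_mul_chebyshevC R (2 * n - 1) n
  have h₂ := chebyshevS_mul_chebyshevC R n n
  have h₂' := chebyshevS_mul_chebyshevC R (n - 1) n
  rw [sub_self, Chebyshev.S_zero] at h₂
  rw [sub_sub_cancel_left, Chebyshev.S_neg_one] at h₂'
  linear_combination (norm := ring_nf) h₃' - h₃ + Chebyshev.C R n * (h₂' - h₂)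

lemma chebyshevT_sq_sub_mul_chebyshevU_sq (n : ℤ) :
    Chebyshev.T R n ^ 2 - (X ^ 2 - 1) * Chebyshev.U R (n - 1) ^ 2 = 1 := by
  have hU := congrArg (·.comp (2 * X)) (Chebyshev.S_sq_add_S_sq R (n - 1))
  simp only [sub_add_cancel, sub_comp, add_comp, mul_comp, pow_comp, X_comp, one_comp,
    Chebyshev.S_comp_two_mul_X] at hU
  rw [Chebyshev.T_eq_U_sub_X_mul_U]
  linear_combination hU

variable {R}

lemma separable_chebyshevT {n : ℤ} (hn : IsUnit (n : R)) : (Chebyshev.T R n).Separable := by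
  obtain ⟨m, hm⟩ := hn.exists_left_inv
  have hm' : C m * (n : R[X]) = 1 := by rw [← C_eq_intCast, ← C_mul, hm, C_1]
  refine ⟨Chebyshev.T R n, -(C m * (X ^ 2 - 1) * Chebyshev.U R (n - 1)), ?_⟩
  rw [Chebyshev.T_derivative_eq_U]
  linear_combination chebyshevT_sq_sub_mul_chebyshevU_sq R n -
    (X ^ 2 - 1) * Chebyshev.U R (n - 1) ^ 2 * hm'

end Identities

lemma ncard_rootSet_chebyshevT (K : Type*) [Field K] [IsAlgClosed K] [NeZero (2 : K)] {n : ℤ}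
    (hn : (n : K) ≠ 0) : ((Chebyshev.T K n).rootSet K).ncard = n.natAbs := by
  rw [← Nat.card_coe_set_eq, Nat.card_eq_fintype_card,
    card_rootSet_eq_natDegree (separable_chebyshevT hn.isUnit) (IsAlgClosed.splits _),
    Chebyshev.natDegree_T]

/-- The solution set of the fiberedness system, for a sequence of functions `S` in place of the
Chebyshev polynomials `Sⱼ` and an arbitrary ring in place of `ℂ`; a point is a pair `(x, z)`. -/
def fiberednessSystem {R : Type*} [CommRing R] (S : ℤ → R → R) (n : ℤ) : Set (R × R) :=
  {p | 4 + (p.2 - 2) * (p.2 + 2 - p.1 ^ 2) * S (n - 1) p.2 ^ 2 = 1 ∧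
    S (3 * n) p.2 - S (3 * n - 1) p.2
      - p.1 ^ 2 * (p.2 - 2) * S (n - 1) p.2 ^ 2 * (S n p.2 - S (n - 1) p.2) = 0}

section Elimination

variable {R : Type*} [CommRing R] {n : ℤ} {x z : R}

lemma fiberednessSystem_second_eq_neg_eval_chebyshevC
    (h : 4 + (z - 2) * (z + 2 - x ^ 2) * (Chebyshev.S R (n - 1)).eval z ^ 2 = 1) :
    (Chebyshev.S R (3 * n)).eval z - (Chebyshev.S R (3 * n - 1)).eval z
      - x ^ 2 * (z - 2) * (Chebyshev.S R (n - 1)).eval z ^ 2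
        * ((Chebyshev.S R n).eval z - (Chebyshev.S R (n - 1)).eval z) =
      -(Chebyshev.C R n).eval z := by
  have hC := congrArg (eval z) (chebyshevC_sq_sub_four R n)
  have hS := congrArg (eval z) (chebyshevS_three_mul_sub R n)
  simp only [eval_sub, eval_mul, eval_pow, eval_X, eval_ofNat, eval_one] at hC hS
  linear_combination hS + ((Chebyshev.S R n).eval z - (Chebyshev.S R (n - 1)).eval z) * (h + hC)

lemma fiberednessSystem_first_iff_of_eval_chebyshevC_eq_zero [IsDomain R] [NeZero (2 : R)]
    (hz : (Chebyshev.C R n).eval z = 0) :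
    4 + (z - 2) * (z + 2 - x ^ 2) * (Chebyshev.S R (n - 1)).eval z ^ 2 = 1 ↔
      z = 4 * x ^ 2 - 2 := by
  have hC := congrArg (eval z) (chebyshevC_sq_sub_four R n)
  simp only [eval_sub, eval_mul, eval_pow, eval_X, eval_ofNat, hz] at hC
  set s := (Chebyshev.S R (n - 1)).eval z
  have h4 : (4 : R) ≠ 0 := by
    rw [show (4 : R) = 2 * 2 by norm_num]
    exact mul_ne_zero two_ne_zero two_ne_zero
  have hs : (z - 2) * s ^ 2 ≠ 0 := fun h ↦ h4 (by linear_combination -hC - (z + 2) * h)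
  have hfactor : 4 * (4 + (z - 2) * (z + 2 - x ^ 2) * s ^ 2 - 1) =
      (z - 2) * s ^ 2 * (z - (4 * x ^ 2 - 2)) := by
    linear_combination -3 * hC
  rw [← sub_eq_zero, ← mul_eq_zero_iff_left h4, hfactor, mul_eq_zero_iff_left hs, sub_eq_zero]

lemma fiberednessSystem_eval_chebyshevS [IsDomain R] [NeZero (2 : R)] (n : ℤ) :
    fiberednessSystem (fun j z ↦ (Chebyshev.S R j).eval z) n =
      ((Chebyshev.T R (2 * n)).rootSet R).graphOn (fun x ↦ 4 * x ^ 2 - 2) := by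
  ext ⟨x, z⟩
  have hT := congrArg (eval x) (chebyshevC_comp_four_mul_X_sq_sub_two R n)
  simp only [eval_comp, eval_sub, eval_mul, eval_pow, eval_X, eval_ofNat] at hT
  calc (x, z) ∈ fiberednessSystem (fun j z ↦ (Chebyshev.S R j).eval z) n
    _ ↔ 4 + (z - 2) * (z + 2 - x ^ 2) * (Chebyshev.S R (n - 1)).eval z ^ 2 = 1 ∧
          (Chebyshev.C R n).eval z = 0 :=
      and_congr_right fun h ↦ by rw [fiberednessSystem_second_eq_neg_eval_chebyshevC h, neg_eq_zero]
    _ ↔ z = 4 * x ^ 2 - 2 ∧ (Chebyshev.C R n).eval z = 0 :=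
      and_congr_left fiberednessSystem_first_iff_of_eval_chebyshevC_eq_zero
    _ ↔ z = 4 * x ^ 2 - 2 ∧ (Chebyshev.T R (2 * n)).eval x = 0 :=
      and_congr_right fun h ↦ by rw [h, hT, mul_eq_zero_iff_left two_ne_zero]
    _ ↔ (x, z) ∈ ((Chebyshev.T R (2 * n)).rootSet R).graphOn (fun x ↦ 4 * x ^ 2 - 2) := by
      simp [mem_rootSet, Chebyshev.T_ne_zero, and_comm, eq_comm (a := z)]

end Elimination

theorem fiberedness_system_card_general {K : Type*} [Field K] [IsAlgClosed K] [NeZero (2 : K)]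
    (S : ℤ → K → K) (hS0 : ∀ z, S 0 z = 1) (hS1 : ∀ z, S 1 z = z)
    (hSrec : ∀ j z, S (j + 1) z = z * S j z - S (j - 1) z) (n : ℤ) (hn : (n : K) ≠ 0) :
    (fiberednessSystem S n).Finite ∧ (fiberednessSystem S n).ncard = 2 * n.natAbs := by
  obtain rfl : S = fun j z ↦ (Chebyshev.S K j).eval z :=
    funext₂ fun j z ↦ eq_eval_chebyshevS (s := fun j ↦ S j z) (hS0 z) (hS1 z) (hSrec · z) j
  have h2n : ((2 * n : ℤ) : K) ≠ 0 := by
    push_cast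
    exact mul_ne_zero two_ne_zero hn
  rw [fiberednessSystem_eval_chebyshevS, Set.ncard_graphOn, ncard_rootSet_chebyshevT K h2n,
    Int.natAbs_mul]
  exact ⟨(rootSet_finite _ _).image _, rfl⟩

/-- For a positive integer `n`, the set of pairs
`(x, z) ∈ ℂ²` satisfying `4 + (z-2)*(z+2-x²)*S (n-1) z ^ 2 = 1` and
`S (3n) z - S (3n-1) z - x²*(z-2)*S (n-1) z ^ 2*(S n z - S (n-1) z) = 0`
is finite and has exactly `2n` elements (where the `S j` are the
Chebyshev-like polynomials with `S 0 = 1`, `S 1 = z` and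
`S (j+1) = z * S j - S (j-1)`). -/
theorem fiberedness_system_card
    (S : ℤ → ℂ → ℂ)
    (hS0 : ∀ z : ℂ, S 0 z = 1)
    (hS1 : ∀ z : ℂ, S 1 z = z)
    (hSrec : ∀ (j : ℤ) (z : ℂ), S (j + 1) z = z * S j z - S (j - 1) z)
    (n : ℕ) (hn : 1 ≤ n) :
    Set.Finite {p : ℂ × ℂ |
        4 + (p.2 - 2) * (p.2 + 2 - p.1 ^ 2) * S ((n : ℤ) - 1) p.2 ^ 2 = 1 ∧
        S (3 * (n : ℤ)) p.2 - S (3 * (n : ℤ) - 1) p.2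
          - p.1 ^ 2 * (p.2 - 2) * S ((n : ℤ) - 1) p.2 ^ 2
            * (S (n : ℤ) p.2 - S ((n : ℤ) - 1) p.2) = 0} ∧
    Set.ncard {p : ℂ × ℂ |
        4 + (p.2 - 2) * (p.2 + 2 - p.1 ^ 2) * S ((n : ℤ) - 1) p.2 ^ 2 = 1 ∧
        S (3 * (n : ℤ)) p.2 - S (3 * (n : ℤ) - 1) p.2
          - p.1 ^ 2 * (p.2 - 2) * S ((n : ℤ) - 1) p.2 ^ 2
            * (S (n : ℤ) p.2 - S ((n : ℤ) - 1) p.2) = 0} = 2 * n :=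
  fiberedness_system_card_general S hS0 hS1 hSrec n (by exact_mod_cast Nat.one_le_iff_ne_zero.mp hn)
end

section
/- Let n ≥ 2 be an integer. The set of complex numbers y with y ≠ 2 and T_n(y) = y is exactly the union of {2·cos(2kπ/(n+1)) : k an integer with 1 ≤ k < (n+1)/2}, {2·cos(2kπ/(n−1)) : k an integer with 1 ≤ k < (n−1)/2}, and, when n is odd, the single point {−2}. -/
/-!
Since `C (m + n) + C (m - n) = C m * C n` and `C (m + n) * C (m - n) = C m ^ 2 + C n ^ 2 - 4` for
the rescaled Chebyshev polynomials `C j (2 cos θ) = 2 cos (j θ)`, we have the factorization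
`(C m - C n) ^ 2 = (C (m + n) - 2) * (C (m - n) - 2)`. Hence `C n y = y = C 1 y` exactly when
`C (n + 1) y = 2` or `C (n - 1) y = 2`, and the solutions of `C m y = 2` are the numbers `ζ + ζ⁻¹`
with `ζ ^ m = 1`, of which `ζ = 1` gives `2` and `ζ = -1` gives `-2`.
-/

section Chebyshev

open Polynomial.Chebyshev

variable {R : Type*} [CommRing R]

theorem eq_chebyshevC_eval_of_recurrence {x : R} {t : ℤ → R} (h_zero : t 0 = 2) (h_one : t 1 = x)
    (h_rec : ∀ j, t (j + 1) = x * t j - t (j - 1)) (j : ℤ) : t j = (C R j).eval x := by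
  induction j using Polynomial.Chebyshev.induct with
  | zero => simp [h_zero]
  | one => simp [h_one]
  | add_two j ih₁ ih₀ =>
    have h := h_rec (j + 1)
    rw [add_assoc, one_add_one_eq_two, add_sub_cancel_right] at h
    simp [C_add_two, h, ih₁, ih₀]
  | neg_add_one j ih₀ ih₁ =>
    rw [C_sub_one, Polynomial.eval_sub, Polynomial.eval_mul, Polynomial.eval_X, ← ih₀, ← ih₁]
    linear_combination h_rec (-j)

theorem chebyshevC_two_mul (n : ℤ) : C R (2 * n) = C R n ^ 2 - 2 := by
  simp [C_mul, C_two]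

theorem chebyshevC_sub_sq (m n : ℤ) :
    (C R m - C R n) ^ 2 = (C R (m + n) - 2) * (C R (m - n) - 2) := by
  have h_sum : C R m * C R n = C R (m + n) + C R (m - n) := C_mul_C R m n
  have h_prod : C R (m + n) * C R (m - n) = C R (2 * m) + C R (2 * n) := by
    rw [C_mul_C]
    ring_nf
  rw [chebyshevC_two_mul, chebyshevC_two_mul] at h_prod
  linear_combination -2 * h_sum - h_prod

theorem chebyshevC_eval_eq_eval_iff [NoZeroDivisors R] {m n : ℤ} {x : R} :
    (C R m).eval x = (C R n).eval x ↔ (C R (m + n)).eval x = 2 ∨ (C R (m - n)).eval x = 2 := by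
  have h := congrArg (Polynomial.eval x) (chebyshevC_sub_sq (R := R) m n)
  simp only [Polynomial.eval_pow, Polynomial.eval_sub, Polynomial.eval_mul,
    Polynomial.eval_ofNat] at h
  rw [← sub_eq_zero, ← sq_eq_zero_iff, h, mul_eq_zero, sub_eq_zero, sub_eq_zero]

theorem chebyshevC_eval_eq_two_iff {m : ℤ} (hm : m ≠ 0) {y : ℂ} :
    (C ℂ m).eval y = 2 ↔ ∃ k : ℤ, y = ((2 * Real.cos (2 * k * Real.pi / m) : ℝ) : ℂ) := by
  have hm' : (m : ℂ) ≠ 0 := Int.cast_ne_zero.2 hm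
  constructor
  · intro h
    obtain ⟨θ, hθ⟩ := Complex.cos_surjective (y / 2)
    obtain rfl : y = 2 * Complex.cos θ := by rw [hθ]; ring
    rw [C_two_mul_complex_cos, mul_eq_left₀ two_ne_zero, Complex.cos_eq_one_iff] at h
    obtain ⟨k, hk⟩ := h
    have hθk : θ = 2 * k * Real.pi / m := by
      rw [eq_div_iff hm']
      linear_combination -hk
    exact ⟨k, by simp [hθk]⟩
  · rintro ⟨k, rfl⟩
    have h_angle : (m : ℂ) * (2 * k * Real.pi / m) = k * (2 * Real.pi) := by
      field_simp
    push_cast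
    rw [C_two_mul_complex_cos, h_angle, Complex.cos_int_mul_two_pi, mul_one]

theorem two_mul_abs_bmod_le {m : ℕ} (hm : m ≠ 0) (k : ℤ) : 2 * |k.bmod m| ≤ m := by
  have h_lower := Int.le_bmod (x := k) (Nat.pos_of_ne_zero hm)
  have h_upper := Int.bmod_lt (x := k) (Nat.pos_of_ne_zero hm)
  have h_abs : |k.bmod m| ≤ m / 2 := abs_le.2 ⟨by omega, by omega⟩
  omega

theorem cos_two_mul_abs_bmod_mul_pi_div {m : ℕ} (hm : m ≠ 0) (k : ℤ) :
    Real.cos (2 * |k.bmod m| * Real.pi / m) = Real.cos (2 * k * Real.pi / m) := by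
  have hm' : (m : ℝ) ≠ 0 := Nat.cast_ne_zero.2 hm
  have hk : (k : ℝ) = k.bmod m + m * k.bdiv m := by
    exact_mod_cast (Int.bmod_add_bdiv k m).symm
  have h_abs : 2 * |(k.bmod m : ℝ)| * Real.pi / m = |2 * k.bmod m * Real.pi / m| := by
    simp [abs_mul, abs_div, abs_of_pos Real.pi_pos]
  have h_shift :
      2 * (k : ℝ) * Real.pi / m = 2 * k.bmod m * Real.pi / m + k.bdiv m * (2 * Real.pi) := by
    rw [hk]
    field_simp
  rw [Int.cast_abs, h_abs, Real.cos_abs, h_shift, Real.cos_add_int_mul_two_pi]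

theorem cos_two_mul_mul_pi_div_ne_one {x y : ℝ} (hx : 0 < x) (hxy : x < y) :
    Real.cos (2 * x * Real.pi / y) ≠ 1 := by
  have hy : 0 < y := hx.trans hxy
  have h_pos : 0 < 2 * x * Real.pi / y := by positivity
  have h_lt : 2 * x * Real.pi / y < 2 * Real.pi := by
    rw [div_lt_iff₀ hy]
    nlinarith [Real.pi_pos]
  rw [Ne, Real.cos_eq_one_iff_of_lt_of_lt (by linarith) h_lt]
  exact h_pos.ne'

/-- The numbers `ζ + ζ⁻¹ = 2 cos (2kπ/m)`, where `ζ = exp (2kπi/m)` runs over the `m`-th roots of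
unity in the open upper half plane; these are the values of `ζ + ζ⁻¹` on all the `m`-th roots of
unity other than `±1`. -/
def nonrealRootOfUnityTraces (m : ℕ) : Set ℂ :=
  {y | ∃ k : ℤ, 1 ≤ k ∧ 2 * k < m ∧ y = ((2 * Real.cos (2 * k * Real.pi / m) : ℝ) : ℂ)}

theorem two_notMem_nonrealRootOfUnityTraces (m : ℕ) : 2 ∉ nonrealRootOfUnityTraces m := by
  rintro ⟨k, hk, hkm, h⟩
  have h_ne : Real.cos (2 * k * Real.pi / m) ≠ 1 :=
    cos_two_mul_mul_pi_div_ne_one (by exact_mod_cast hk) (by exact_mod_cast (by omega : k < m))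
  have h_eq : 2 * Real.cos (2 * k * Real.pi / m) = 2 := by exact_mod_cast h.symm
  exact h_ne ((mul_eq_left₀ two_ne_zero).1 h_eq)

theorem chebyshevC_eval_eq_two_iff_mem {m : ℕ} (hm : m ≠ 0) {y : ℂ} :
    (C ℂ m).eval y = 2 ↔ y = 2 ∨ y ∈ nonrealRootOfUnityTraces m ∨ Even m ∧ y = -2 := by
  constructor
  · intro hy
    obtain ⟨k, rfl⟩ := (chebyshevC_eval_eq_two_iff (Int.natCast_ne_zero.2 hm)).1 hy
    rw [Int.cast_natCast, ← cos_two_mul_abs_bmod_mul_pi_div hm k]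
    have h_nonneg : 0 ≤ |k.bmod m| := abs_nonneg _
    have h_le : 2 * |k.bmod m| ≤ m := two_mul_abs_bmod_le hm k
    generalize |k.bmod m| = r at h_nonneg h_le ⊢
    rcases h_nonneg.eq_or_lt with rfl | h_pos
    · left
      simp
    rcases h_le.eq_or_lt with h_eq | h_lt
    · have h_eq' : 2 * (r : ℝ) = m := by exact_mod_cast h_eq
      have hm' : (m : ℝ) ≠ 0 := Nat.cast_ne_zero.2 hm
      refine .inr (.inr ⟨by rw [Nat.even_iff]; omega, ?_⟩)
      rw [h_eq', mul_div_cancel_left₀ _ hm', Real.cos_pi]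
      norm_num
    · exact .inr (.inl ⟨r, h_pos, h_lt, rfl⟩)
  · rintro (rfl | ⟨k, -, -, rfl⟩ | ⟨h_even, rfl⟩)
    · exact C_eval_two ℂ m
    · exact (chebyshevC_eval_eq_two_iff (Int.natCast_ne_zero.2 hm)).2 ⟨k, by simp⟩
    · rw [C_eval_neg_two, Int.negOnePow_even _ (by exact_mod_cast h_even)]
      norm_num

theorem setOf_ne_two_and_chebyshevC_eval_eq_two {m : ℕ} (hm : m ≠ 0) :
    {y : ℂ | y ≠ 2 ∧ (C ℂ m).eval y = 2} =
      nonrealRootOfUnityTraces m ∪ if Even m then {-2} else ∅ := by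
  have h_mem_ne {y : ℂ} (hy : y ∈ nonrealRootOfUnityTraces m) : y ≠ 2 :=
    ne_of_mem_of_not_mem hy (two_notMem_nonrealRootOfUnityTraces m)
  have h_neg_ne {y : ℂ} (hy : y = -2) : y ≠ 2 := by
    rw [hy]
    norm_num
  ext y
  rw [Set.mem_ofPred_eq, chebyshevC_eval_eq_two_iff_mem hm, Set.mem_union, Set.mem_ite_empty_right,
    Set.mem_singleton_iff]
  tauto

end Chebyshev

/-- For an integer `n ≥ 2`, the set of complex numbers
`y ≠ 2` with `T n y = y` is exactly the union of
`{2 cos (2kπ/(n+1)) : k ∈ ℤ, 1 ≤ k < (n+1)/2}`,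
`{2 cos (2kπ/(n-1)) : k ∈ ℤ, 1 ≤ k < (n-1)/2}`, and, when `n` is odd, the
single point `{-2}`.  Here the `T j` are the Chebyshev-like polynomials with
`T 0 = 2`, `T 1 = y` and `T (j+1) = y * T j - T (j-1)`. -/
theorem Tn_eq_self_solutions
    (T : ℤ → ℂ → ℂ)
    (hT0 : ∀ z : ℂ, T 0 z = 2)
    (hT1 : ∀ z : ℂ, T 1 z = z)
    (hTrec : ∀ (j : ℤ) (z : ℂ), T (j + 1) z = z * T j z - T (j - 1) z)
    (n : ℕ) (hn : 2 ≤ n) :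
    {y : ℂ | y ≠ 2 ∧ T (n : ℤ) y = y}
      = {y : ℂ | ∃ k : ℤ, 1 ≤ k ∧ 2 * k < (n : ℤ) + 1 ∧
            y = ((2 * Real.cos (2 * k * Real.pi / (n + 1)) : ℝ) : ℂ)}
        ∪ {y : ℂ | ∃ k : ℤ, 1 ≤ k ∧ 2 * k < (n : ℤ) - 1 ∧
            y = ((2 * Real.cos (2 * k * Real.pi / (n - 1 : ℕ)) : ℝ) : ℂ)}
        ∪ (if Odd n then ({-2} : Set ℂ) else ∅) := by
  have h_succ : ((n + 1 : ℕ) : ℤ) = n + 1 := Nat.cast_succ n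
  have h_pred : ((n - 1 : ℕ) : ℤ) = n - 1 := Nat.cast_pred (by omega)
  have h_even_succ : Even (n + 1) ↔ Odd n := by grind
  have h_even_pred : Even (n - 1) ↔ Odd n := by grind
  have hT (y : ℂ) : T n y = (Polynomial.Chebyshev.C ℂ n).eval y :=
    eq_chebyshevC_eval_of_recurrence (t := (T · y)) (hT0 y) (hT1 y) (hTrec · y) n
  have hT_iff (y : ℂ) : T n y = y ↔ (Polynomial.Chebyshev.C ℂ (n + 1 : ℕ)).eval y = 2 ∨
      (Polynomial.Chebyshev.C ℂ (n - 1 : ℕ)).eval y = 2 := by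
    rw [h_succ, h_pred, ← chebyshevC_eval_eq_eval_iff, Polynomial.Chebyshev.C_one,
      Polynomial.eval_X, ← hT]
  calc
    _ = {y : ℂ | y ≠ 2 ∧ (Polynomial.Chebyshev.C ℂ (n + 1 : ℕ)).eval y = 2} ∪
        {y : ℂ | y ≠ 2 ∧ (Polynomial.Chebyshev.C ℂ (n - 1 : ℕ)).eval y = 2} := by
      simp only [hT_iff, and_or_left, Set.ofPred_or]
    _ = nonrealRootOfUnityTraces (n + 1) ∪ nonrealRootOfUnityTraces (n - 1) ∪
        if Odd n then {-2} else ∅ := by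
      rw [setOf_ne_two_and_chebyshevC_eval_eq_two (by omega),
        setOf_ne_two_and_chebyshevC_eval_eq_two (by omega)]
      simp only [h_even_succ, h_even_pred, ← Set.union_union_distrib_right]
    _ = _ := by
      simp only [nonrealRootOfUnityTraces, h_succ, h_pred, Nat.cast_succ]
end

section
/- Let n > 1 be an integer and define R_odd(x,y) = −(y+1)·S_{n−1}(y)² + S_{n−2}(y)² + 2·S_{n−1}(y)·S_{n−2}(y) + x²·S_{n−1}(y)·(S_{n−1}(y) − S_{n−2}(y)). Then the set of pairs (x,y) ∈ ℂ² satisfying y ≠ 2, T_n(y) = y, and R_odd(x,y) = 0 is finite and has exactly 2n − 2 − cₙ − dₙ − eₙ elements, where cₙ = 1 if n ≡ 1 (mod 3) and cₙ = 0 otherwise, dₙ = 2 if n ≡ 5 (mod 6) and dₙ = 0 otherwise, and eₙ = 2 if n ≡ 4 (mod 5) and eₙ = 0 otherwise. -/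
/-!
Write `y = t + t⁻¹`. Then `T_n(y) = tⁿ + t⁻ⁿ`, so `T_n(y) = y` means `tⁿ = t` or `tⁿ = t⁻¹`: apart
from `y = 2` and, for odd `n`, `y = -2`, the values `y` that occur are the traces of the roots of
unity `t ≠ ±1` of order dividing `n - 1` or `n + 1`. On these families `R_odd(x, y)` collapses to
`x² - (y + 1)` and `(1 - y)x² + (y² + y - 1)` respectively, and at `y = -2` it is
`n(2n - 1)x² + 1`. So there are two `x` over each `y`, except over `y = -1` (one `x`), `y = 1`
(none) and the two roots of `y² + y - 1` (one each); these exceptional `y` are the traces of the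
primitive roots of unity of order 3, 6 and 5, and they account for `cₙ`, `dₙ` and `eₙ`.
-/

open Polynomial

section Traces

variable {K : Type*} [Field K] {m : ℕ}

theorem add_inv_eq_add_inv_iff {s t : K} (hs : s ≠ 0) (ht : t ≠ 0) :
    s + s⁻¹ = t + t⁻¹ ↔ s = t ∨ s = t⁻¹ := by
  have factor : (s + s⁻¹ - (t + t⁻¹)) * s = (s - t) * (s - t⁻¹) := by
    field_simp
    ring
  rw [← sub_eq_zero, ← sub_eq_zero (a := s) (b := t), ← sub_eq_zero (a := s) (b := t⁻¹),
    ← mul_eq_zero, ← factor, mul_eq_zero, or_iff_left hs]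

theorem add_inv_eq_two_iff {t : K} (ht : t ≠ 0) : t + t⁻¹ = 2 ↔ t = 1 := by
  rw [← one_add_one_eq_two]
  simpa using add_inv_eq_add_inv_iff ht one_ne_zero

theorem add_inv_eq_neg_two_iff {t : K} (ht : t ≠ 0) : t + t⁻¹ = -2 ↔ t = -1 := by
  rw [← one_add_one_eq_two, neg_add]
  simpa using add_inv_eq_add_inv_iff ht (neg_ne_zero.2 one_ne_zero)

theorem exists_add_inv_eq [IsAlgClosed K] (y : K) : ∃ t : K, t ≠ 0 ∧ t + t⁻¹ = y := by
  obtain ⟨t, ht⟩ := IsAlgClosed.exists_root (C 1 * X ^ 2 + C (-y) * X + C 1)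
    (by rw [degree_quadratic one_ne_zero]; norm_num)
  simp only [IsRoot.def, eval_add, eval_mul, eval_pow, eval_C, eval_X] at ht
  have ht0 : t ≠ 0 := by
    rintro rfl
    norm_num at ht
  refine ⟨t, ht0, ?_⟩
  field_simp
  linear_combination ht

variable (K) in
open Classical in
/-- The traces `t + t⁻¹` of the `m`-th roots of unity `t ≠ ±1`, that is, of the matrices in
`SL₂(K)` with distinct eigenvalues `t, t⁻¹` and `m`-th power one. It is empty for `m = 0`. -/
noncomputable def rootTraces (m : ℕ) : Finset K :=
  {t ∈ nthRootsFinset m (1 : K) | t ^ 2 ≠ 1}.image fun t => t + t⁻¹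

theorem mem_rootTraces [NeZero m] {y : K} :
    y ∈ rootTraces K m ↔ ∃ t : K, t ^ m = 1 ∧ t ^ 2 ≠ 1 ∧ t + t⁻¹ = y := by
  simp only [rootTraces, Finset.mem_image, Finset.mem_filter, mem_nthRootsFinset (NeZero.pos m),
    and_assoc]

theorem ne_zero_of_pow_eq_one [NeZero m] {t : K} (ht : t ^ m = 1) : t ≠ 0 :=
  (IsUnit.of_pow_eq_one ht (NeZero.ne m)).ne_zero

theorem add_inv_mem_rootTraces_iff [NeZero m] {t : K} (ht : t ≠ 0) :
    t + t⁻¹ ∈ rootTraces K m ↔ t ^ m = 1 ∧ t ^ 2 ≠ 1 := by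
  rw [mem_rootTraces]
  refine ⟨?_, fun ⟨h, h2⟩ => ⟨t, h, h2, rfl⟩⟩
  rintro ⟨s, hs, hs2, hst⟩
  rcases (add_inv_eq_add_inv_iff (ne_zero_of_pow_eq_one hs) ht).1 hst with rfl | rfl
  · exact ⟨hs, hs2⟩
  · simpa only [inv_pow, inv_eq_one, ne_eq] using And.intro hs hs2

theorem add_inv_mem_rootTraces_iff_dvd [NeZero m] {k : ℕ} (hk : 2 < k) {t : K}
    (ht : IsPrimitiveRoot t k) : t + t⁻¹ ∈ rootTraces K m ↔ k ∣ m := by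
  have ht2 : t ^ 2 ≠ 1 := ht.pow_ne_one_of_pos_of_lt two_ne_zero hk
  rw [add_inv_mem_rootTraces_iff (ht.ne_zero (by omega)), ht.pow_eq_one_iff_dvd,
    and_iff_left ht2]

theorem neg_two_notMem_rootTraces [NeZero m] : (-2 : K) ∉ rootTraces K m := by
  rw [mem_rootTraces]
  rintro ⟨t, ht, ht2, h⟩
  rw [add_inv_eq_neg_two_iff (ne_zero_of_pow_eq_one ht)] at h
  simp [h] at ht2

open Classical in
theorem card_filter_sq_ne_one_nthRootsFinset [NeZero m] {ζ : K} (hζ : IsPrimitiveRoot ζ m) :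
    {t ∈ nthRootsFinset m (1 : K) | t ^ 2 ≠ 1}.card = m - m.gcd 2 := by
  have hgcd : 0 < m.gcd 2 := Nat.gcd_pos_of_pos_left 2 (NeZero.pos m)
  have sq_eq_one :
      {t ∈ nthRootsFinset m (1 : K) | t ^ 2 = 1} = nthRootsFinset (m.gcd 2) (1 : K) := by
    ext t
    rw [Finset.mem_filter, mem_nthRootsFinset (NeZero.pos m), mem_nthRootsFinset hgcd,
      pow_gcd_eq_one]
  have hζgcd : IsPrimitiveRoot (ζ ^ (m / m.gcd 2)) (m.gcd 2) :=
    hζ.pow (NeZero.pos m) (Nat.div_mul_cancel (m.gcd_dvd_left 2)).symm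
  have split := Finset.card_filter_add_card_filter_not (s := nthRootsFinset m (1 : K))
    (fun t => t ^ 2 = 1)
  rw [sq_eq_one, hζgcd.card_nthRootsFinset, hζ.card_nthRootsFinset] at split
  exact Nat.eq_sub_of_add_eq' split

open Classical in
theorem filter_add_inv_eq [NeZero m] {s : K} (hs : s ^ m = 1) (hs2 : s ^ 2 ≠ 1) :
    {t ∈ {t ∈ nthRootsFinset m (1 : K) | t ^ 2 ≠ 1} | t + t⁻¹ = s + s⁻¹} = {s, s⁻¹} := by
  ext t
  simp only [Finset.mem_filter, mem_nthRootsFinset (NeZero.pos m), Finset.mem_insert,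
    Finset.mem_singleton]
  constructor
  · rintro ⟨⟨ht, -⟩, hts⟩
    exact (add_inv_eq_add_inv_iff (ne_zero_of_pow_eq_one ht) (ne_zero_of_pow_eq_one hs)).1 hts
  · rintro (rfl | rfl)
    · exact ⟨⟨hs, hs2⟩, rfl⟩
    · simp [hs, hs2, add_comm]

theorem card_rootTraces [NeZero m] [HasEnoughRootsOfUnity K m] :
    (rootTraces K m).card = (m - 1) / 2 := by
  classical
  obtain ⟨ζ, hζ⟩ := HasEnoughRootsOfUnity.exists_primitiveRoot K m
  have two_to_one : m - m.gcd 2 = (rootTraces K m).card * 2 := by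
    rw [← card_filter_sq_ne_one_nthRootsFinset hζ,
      Finset.card_eq_sum_card_image fun t : K => t + t⁻¹, ← smul_eq_mul, ← Finset.sum_const]
    refine Finset.sum_congr rfl fun y hy => ?_
    obtain ⟨s, hs, hs2, rfl⟩ := mem_rootTraces.1 hy
    rw [filter_add_inv_eq hs hs2, Finset.card_pair]
    intro h
    rw [sq, ← mul_inv_cancel₀ (ne_zero_of_pow_eq_one hs), ← h] at hs2
    exact hs2 rfl
  have gcd_two : m.gcd 2 = if m % 2 = 0 then 2 else 1 := by
    rw [Nat.gcd_comm, Nat.gcd_rec]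
    rcases Nat.mod_two_eq_zero_or_one m with h | h <;> simp [h]
  split_ifs at gcd_two <;> omega

end Traces

section SpecialTraces

variable {K : Type*} [Field K] [CharZero K]

theorem isPrimitiveRoot_three_iff {t : K} (ht : t ≠ 0) :
    IsPrimitiveRoot t 3 ↔ t + t⁻¹ = -1 := by
  rw [← isRoot_cyclotomic_iff_charZero three_pos, cyclotomic_three]
  simp only [IsRoot.def, eval_add, eval_pow, eval_X, eval_one]
  field_simp
  constructor <;> intro h <;> linear_combination h

theorem isPrimitiveRoot_six_iff {t : K} (ht : t ≠ 0) :
    IsPrimitiveRoot t 6 ↔ t + t⁻¹ = 1 := by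
  rw [← isRoot_cyclotomic_iff_charZero (by norm_num), cyclotomic_six]
  simp only [IsRoot.def, eval_add, eval_sub, eval_pow, eval_X, eval_one]
  field_simp
  constructor <;> intro h <;> linear_combination h

theorem isPrimitiveRoot_five_iff {t : K} (ht : t ≠ 0) :
    IsPrimitiveRoot t 5 ↔ (t + t⁻¹) ^ 2 + (t + t⁻¹) - 1 = 0 := by
  have : Fact (Nat.Prime 5) := ⟨Nat.prime_five⟩
  rw [← isRoot_cyclotomic_iff_charZero (by norm_num), cyclotomic_prime]
  simp only [IsRoot.def, Finset.sum_range_succ, Finset.sum_range_zero, eval_add, eval_zero,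
    eval_pow, eval_X]
  field_simp
  constructor <;> intro h <;> linear_combination h

theorem sq_add_self_sub_one_eq_zero_of_mem_rootTraces_five {y : K} (hy : y ∈ rootTraces K 5) :
    y ^ 2 + y - 1 = 0 := by
  obtain ⟨t, ht, ht2, rfl⟩ := mem_rootTraces.1 hy
  have : Fact (Nat.Prime 5) := ⟨Nat.prime_five⟩
  have ht1 : t ≠ 1 := by
    rintro rfl
    simp at ht2
  exact (isPrimitiveRoot_five_iff (ne_zero_of_pow_eq_one ht)).1
    (IsPrimitiveRoot.iff_orderOf.2 (orderOf_eq_prime ht ht1))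

variable [IsAlgClosed K] {m : ℕ}

theorem neg_one_mem_rootTraces_iff [NeZero m] : (-1 : K) ∈ rootTraces K m ↔ 3 ∣ m := by
  obtain ⟨t, ht, h⟩ := exists_add_inv_eq (-1 : K)
  rw [← h]
  exact add_inv_mem_rootTraces_iff_dvd (by norm_num) ((isPrimitiveRoot_three_iff ht).2 h)

theorem one_mem_rootTraces_iff [NeZero m] : (1 : K) ∈ rootTraces K m ↔ 6 ∣ m := by
  obtain ⟨t, ht, h⟩ := exists_add_inv_eq (1 : K)
  rw [← h]
  exact add_inv_mem_rootTraces_iff_dvd (by norm_num) ((isPrimitiveRoot_six_iff ht).2 h)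

theorem mem_rootTraces_iff_five_dvd [NeZero m] {y : K} (hy : y ^ 2 + y - 1 = 0) :
    y ∈ rootTraces K m ↔ 5 ∣ m := by
  obtain ⟨t, ht, rfl⟩ := exists_add_inv_eq y
  exact add_inv_mem_rootTraces_iff_dvd (by norm_num) ((isPrimitiveRoot_five_iff ht).2 hy)

open Classical in
theorem card_filter_sq_add_self_sub_one_rootTraces [NeZero m] :
    {y ∈ rootTraces K m | y ^ 2 + y - 1 = 0}.card = if 5 ∣ m then 2 else 0 := by
  split_ifs with h5
  · have : {y ∈ rootTraces K m | y ^ 2 + y - 1 = 0} = rootTraces K 5 := by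
      ext y
      rw [Finset.mem_filter]
      refine ⟨fun h => (mem_rootTraces_iff_five_dvd h.2).2 dvd_rfl, fun h => ?_⟩
      have hy := sq_add_self_sub_one_eq_zero_of_mem_rootTraces_five h
      exact ⟨(mem_rootTraces_iff_five_dvd hy).2 h5, hy⟩
    rw [this, card_rootTraces]
  · rw [Finset.card_eq_zero, Finset.filter_eq_empty_iff]
    exact fun y hym hy => h5 ((mem_rootTraces_iff_five_dvd hy).1 hym)

end SpecialTraces

section Chebyshev

theorem eq_of_chebyshev_recurrence {R : Type*} [Ring R] {z : R} {f g : ℤ → R}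
    (hf : ∀ j, f (j + 1) = z * f j - f (j - 1)) (hg : ∀ j, g (j + 1) = z * g j - g (j - 1))
    (h0 : f 0 = g 0) (h1 : f 1 = g 1) (j : ℤ) : f j = g j := by
  induction j using Polynomial.Chebyshev.induct with
  | zero => exact h0
  | one => exact h1
  | add_two n ih1 ih2 =>
    have hfn := hf (n + 1)
    have hgn := hg (n + 1)
    rw [add_sub_cancel_right, add_assoc, one_add_one_eq_two] at hfn hgn
    rw [hfn, hgn, ih1, ih2]
  | neg_add_one n ih1 ih2 =>
    have hfn := hf (-n)
    have hgn := hg (-n)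
    rw [eq_sub_iff_add_eq', ← eq_sub_iff_add_eq] at hfn hgn
    rw [hfn, hgn, ih1, ih2]

theorem eq_eval_C_of_recurrence {R : Type*} [CommRing R] {z : R} {f : ℤ → R}
    (hf : ∀ j, f (j + 1) = z * f j - f (j - 1)) (h0 : f 0 = 2) (h1 : f 1 = z) (j : ℤ) :
    f j = (Chebyshev.C R j).eval z :=
  eq_of_chebyshev_recurrence (g := fun j => (Chebyshev.C R j).eval z) hf
    (by simp [Chebyshev.C_add_one]) (by simp [h0]) (by simp [h1]) j

theorem eq_eval_S_of_recurrence {R : Type*} [CommRing R] {z : R} {f : ℤ → R}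
    (hf : ∀ j, f (j + 1) = z * f j - f (j - 1)) (h0 : f 0 = 1) (h1 : f 1 = z) (j : ℤ) :
    f j = (Chebyshev.S R j).eval z :=
  eq_of_chebyshev_recurrence (g := fun j => (Chebyshev.S R j).eval z) hf
    (by simp [Chebyshev.S_add_one]) (by simp [h0]) (by simp [h1]) j

theorem eval_S_add_mul_sub {R : Type*} [CommRing R] {x y : R} (h : x * y = 1) (n : ℕ) :
    (Chebyshev.S R n).eval (x + y) * (x - y) = x ^ (n + 1) - y ^ (n + 1) := by
  induction n using Nat.twoStepInduction with
  | zero => simp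
  | one =>
    simp only [Nat.cast_one, Chebyshev.S_one, eval_X]
    ring
  | more n ih1 ih2 =>
    push_cast at ih2 ⊢
    rw [Chebyshev.S_add_two, eval_sub, eval_mul, eval_X]
    linear_combination (x + y) * ih2 - ih1 + (x ^ (n + 1) - y ^ (n + 1)) * h

variable {K : Type*} [Field K]

theorem eval_C_add_inv {t : K} (ht : t ≠ 0) (n : ℕ) :
    (Chebyshev.C K n).eval (t + t⁻¹) = t ^ n + (t ^ n)⁻¹ := by
  rw [← dickson_one_one_eq_chebyshev_C, dickson_one_one_eval_add_inv _ _ (mul_inv_cancel₀ ht),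
    inv_pow]

theorem eval_C_add_inv_eq_self_iff {t : K} (ht : t ≠ 0) {n : ℕ} (hn : 0 < n) :
    (Chebyshev.C K n).eval (t + t⁻¹) = t + t⁻¹ ↔ t ^ (n - 1) = 1 ∨ t ^ (n + 1) = 1 := by
  rw [eval_C_add_inv ht, add_inv_eq_add_inv_iff (pow_ne_zero n ht) ht, ← pow_sub_one_mul hn.ne' t,
    mul_eq_right₀ ht, pow_sub_one_mul hn.ne' t, pow_succ, mul_eq_one_iff_eq_inv₀ ht]

theorem eval_S_of_mem_rootTraces {m : ℕ} [NeZero m] {y : K} (hy : y ∈ rootTraces K m) :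
    (Chebyshev.S K (m - 1)).eval y = 0 ∧ (Chebyshev.S K m).eval y = 1 := by
  obtain ⟨t, ht, ht2, rfl⟩ := mem_rootTraces.1 hy
  have htt : t * t⁻¹ = 1 := mul_inv_cancel₀ (ne_zero_of_pow_eq_one ht)
  have hsub : t - t⁻¹ ≠ 0 := fun h => ht2 (by linear_combination t * h + htt)
  constructor
  · refine (mul_eq_zero_iff_right hsub).1 ?_
    have := eval_S_add_mul_sub htt (m - 1)
    rwa [Nat.sub_add_cancel (NeZero.pos m), inv_pow, ht, inv_one, sub_self,
      Nat.cast_pred (NeZero.pos m)] at this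
  · refine mul_right_cancel₀ hsub ?_
    rw [eval_S_add_mul_sub htt, one_mul, pow_succ, pow_succ, inv_pow, ht, inv_one, one_mul, one_mul]

end Chebyshev

section FixedPoints

variable {K : Type*} [Field K] {n : ℕ}

theorem disjoint_rootTraces_pred_succ (hn : 1 < n) :
    Disjoint (rootTraces K (n - 1)) (rootTraces K (n + 1)) := by
  have : NeZero (n - 1) := ⟨by omega⟩
  rw [Finset.disjoint_left]
  intro y hpred hsucc
  obtain ⟨t, ht, ht2, rfl⟩ := mem_rootTraces.1 hpred
  have htsucc := ((add_inv_mem_rootTraces_iff (ne_zero_of_pow_eq_one ht)).1 hsucc).1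
  rw [show n + 1 = n - 1 + 2 by omega, pow_add, ht, one_mul] at htsucc
  exact ht2 htsucc

variable (K n) in
open Classical in
/-- The fixed points `y ≠ 2` of the rescaled Chebyshev polynomial `T_n`, which is Mathlib's
`Polynomial.Chebyshev.C`; see `mem_chebyshevFixedPoints`. -/
noncomputable def chebyshevFixedPoints : Finset K :=
  rootTraces K (n - 1) ∪ rootTraces K (n + 1) ∪ if Odd n then {-2} else ∅

theorem sum_chebyshevFixedPoints (hn : 1 < n) (f : K → ℕ) :
    ∑ y ∈ chebyshevFixedPoints K n, f y = ∑ y ∈ rootTraces K (n - 1), f y +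
      ∑ y ∈ rootTraces K (n + 1), f y + if Odd n then f (-2) else 0 := by
  classical
  have : NeZero (n - 1) := ⟨by omega⟩
  have disjoint_neg_two : Disjoint (rootTraces K (n - 1) ∪ rootTraces K (n + 1))
      (if Odd n then {-2} else ∅) := by
    split_ifs
    · simp [neg_two_notMem_rootTraces]
    · exact Finset.disjoint_empty_right _
  rw [chebyshevFixedPoints, Finset.sum_union disjoint_neg_two,
    Finset.sum_union (disjoint_rootTraces_pred_succ hn)]
  split_ifs <;> simp

theorem mem_chebyshevFixedPoints [IsAlgClosed K] [NeZero (2 : K)] (hn : 1 < n) {y : K} :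
    y ∈ chebyshevFixedPoints K n ↔ y ≠ 2 ∧ (Chebyshev.C K n).eval y = y := by
  classical
  have : NeZero (n - 1) := ⟨by omega⟩
  have neg_one_ne_one : (-1 : K) ≠ 1 :=
    fun h => two_ne_zero (α := K) (by linear_combination -h)
  have mem_ite : y ∈ (if Odd n then {-2} else ∅ : Finset K) ↔ Odd n ∧ y = -2 := by
    split_ifs with h <;> simp [h]
  rw [chebyshevFixedPoints, Finset.mem_union, Finset.mem_union, mem_ite]
  obtain ⟨t, ht, rfl⟩ := exists_add_inv_eq y
  rw [eval_C_add_inv_eq_self_iff ht (by omega), ne_eq, add_inv_eq_two_iff ht,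
    add_inv_eq_neg_two_iff ht, add_inv_mem_rootTraces_iff ht, add_inv_mem_rootTraces_iff ht]
  by_cases h1 : t = 1
  · simp [h1, neg_one_ne_one.symm]
  by_cases h2 : t = -1
  · have even_iff_odd : (Even (n - 1) ∨ Even (n + 1)) ↔ Odd n := by grind
    simp [h2, neg_one_ne_one, neg_one_pow_eq_one_iff_even, even_iff_odd]
  · simp [h1, h2]

end FixedPoints

section Fibers

theorem finite_and_ncard_setOf_snd_mem_and_fst_mem {α β : Type*} (Y : Finset β) (F : β → Set α)
    (hF : ∀ y ∈ Y, (F y).Finite) :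
    {p : α × β | p.2 ∈ Y ∧ p.1 ∈ F p.2}.Finite ∧
      {p : α × β | p.2 ∈ Y ∧ p.1 ∈ F p.2}.ncard = ∑ y ∈ Y, (F y).ncard := by
  have (y : Y) : Finite (F y) := hF y y.2
  let e : (Σ y : Y, F y) ≃ {p : α × β | p.2 ∈ Y ∧ p.1 ∈ F p.2} :=
    { toFun := fun q => ⟨(q.2, q.1), q.1.2, q.2.2⟩
      invFun := fun p => ⟨⟨p.1.2, p.2.1⟩, ⟨p.1.1, p.2.2⟩⟩
      left_inv := fun _ => rfl
      right_inv := fun _ => rfl }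
  refine ⟨Finite.of_equiv _ e, ?_⟩
  rw [← Nat.card_coe_set_eq, ← Nat.card_congr e, Nat.card_sigma, ← Finset.sum_coe_sort Y]
  simp only [Nat.card_coe_set_eq]

variable {K : Type*} [Field K]

open Classical in
theorem ncard_setOf_mul_sq_add_eq_zero [IsAlgClosed K] [NeZero (2 : K)] {a : K} (ha : a ≠ 0)
    (b : K) : {x | a * x ^ 2 + b = 0}.ncard = if b = 0 then 1 else 2 := by
  obtain ⟨s, hs⟩ := IsAlgClosed.exists_pow_nat_eq (-b / a) two_pos
  have hb : b = -(a * s ^ 2) := by rw [hs, mul_div_cancel₀ _ ha, neg_neg]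
  have roots : {x | a * x ^ 2 + b = 0} = {s, -s} := by
    ext x
    rw [Set.mem_ofPred_eq, hb, ← sub_eq_add_neg, ← mul_sub, mul_eq_zero, or_iff_right ha,
      sub_eq_zero, sq_eq_sq_iff_eq_or_eq_neg]
    rfl
  have hb0 : b = 0 ↔ s = 0 := by simp [hb, ha]
  rw [roots]
  split_ifs with h
  · simp [hb0.1 h]
  · refine Set.ncard_pair fun hneg => h (hb0.2 ?_)
    exact (mul_eq_zero_iff_left (two_ne_zero (α := K))).1 (by linear_combination hneg)

theorem finite_setOf_mul_sq_add_eq_zero {a b : K} (h : a ≠ 0 ∨ b ≠ 0) :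
    {x | a * x ^ 2 + b = 0}.Finite := by
  have hp : C a * X ^ 2 + C b ≠ 0 := by
    intro hp
    have hcoeff (i : ℕ) := congrArg (coeff · i) hp
    rcases h with ha | hb
    · exact ha (by simpa using hcoeff 2)
    · exact hb (by simpa using hcoeff 0)
  simpa using finite_setOfPred_isRoot hp

/-- The polynomial `R_odd(x, y)` attached to `n`, with `S_j` taken to be Mathlib's rescaled
Chebyshev polynomial `Polynomial.Chebyshev.S`. -/
noncomputable def oddFactor (n : ℤ) (x y : K) : K :=
  -((y + 1) * (Chebyshev.S K (n - 1)).eval y ^ 2) + (Chebyshev.S K (n - 2)).eval y ^ 2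
    + 2 * (Chebyshev.S K (n - 1)).eval y * (Chebyshev.S K (n - 2)).eval y
    + x ^ 2 * (Chebyshev.S K (n - 1)).eval y
      * ((Chebyshev.S K (n - 1)).eval y - (Chebyshev.S K (n - 2)).eval y)

theorem oddFactor_of_mem_rootTraces_pred {n : ℕ} (hn : 1 < n) (x : K) {y : K}
    (hy : y ∈ rootTraces K (n - 1)) : oddFactor n x y = 1 * x ^ 2 + -(y + 1) := by
  have : NeZero (n - 1) := ⟨by omega⟩
  obtain ⟨hS2, hS1⟩ := eval_S_of_mem_rootTraces hy
  rw [Nat.cast_pred (by omega)] at hS1 hS2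
  rw [sub_sub, one_add_one_eq_two] at hS2
  rw [oddFactor, hS1, hS2]
  ring

theorem oddFactor_of_mem_rootTraces_succ {n : ℕ} (x : K) {y : K}
    (hy : y ∈ rootTraces K (n + 1)) :
    oddFactor n x y = (1 - y) * x ^ 2 + (y ^ 2 + y - 1) := by
  obtain ⟨hS0, hS⟩ := eval_S_of_mem_rootTraces hy
  rw [Nat.cast_succ] at hS hS0
  rw [add_sub_cancel_right] at hS0
  have hS1 : (Chebyshev.S K (n - 1)).eval y = -1 := by
    simp [Chebyshev.S_sub_one, hS0, hS]
  have hS2 : (Chebyshev.S K (n - 2)).eval y = -y := by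
    simp [Chebyshev.S_sub_two, hS0, hS1]
  rw [oddFactor, hS1, hS2]
  ring

theorem oddFactor_neg_two (n : ℤ) (x : K) :
    oddFactor n x (-2) = n * (2 * n - 1) * x ^ 2 + 1 := by
  have sign_sq : (((n - 1).negOnePow : ℤ) : K) ^ 2 = 1 := by
    norm_cast
    simp
  have sign_pred : (((n - 2).negOnePow : ℤ) : K) = -((n - 1).negOnePow : ℤ) := by
    rw [show n - 2 = n - 1 - 1 by ring, Int.negOnePow_sub _ 1]
    simp
  rw [oddFactor, Chebyshev.S_eval_neg_two, Chebyshev.S_eval_neg_two, sign_pred]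
  push_cast
  linear_combination (n * (2 * n - 1) * x ^ 2 + 1) * sign_sq

end Fibers

section Counting

variable {K : Type*} [Field K] [CharZero K] {n : ℕ}

theorem finite_setOf_oddFactor_eq_zero (hn : 1 < n) {y : K} (hy : y ∈ chebyshevFixedPoints K n) :
    {x | oddFactor n x y = 0}.Finite := by
  classical
  simp only [chebyshevFixedPoints, Finset.mem_union] at hy
  rcases hy with (hpred | hsucc) | hneg
  · simp only [oddFactor_of_mem_rootTraces_pred hn _ hpred]
    exact finite_setOf_mul_sq_add_eq_zero (.inl one_ne_zero)
  · simp only [oddFactor_of_mem_rootTraces_succ _ hsucc]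
    refine finite_setOf_mul_sq_add_eq_zero ?_
    rw [sub_ne_zero, or_iff_not_imp_left, not_ne_iff]
    rintro rfl
    simp
  · obtain rfl : y = -2 := by
      split_ifs at hneg <;> simp_all
    simp only [oddFactor_neg_two]
    exact finite_setOf_mul_sq_add_eq_zero (.inr one_ne_zero)

variable [IsAlgClosed K]

theorem ncard_setOf_oddFactor_neg_two (hn : 0 < n) :
    {x : K | oddFactor n x (-2) = 0}.ncard = 2 := by
  have lead_ne_zero : ((n : ℤ) : K) * (2 * (n : ℤ) - 1) ≠ 0 := by
    exact_mod_cast mul_ne_zero (by omega : (n : ℤ) ≠ 0) (by omega : 2 * (n : ℤ) - 1 ≠ 0)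
  simp only [oddFactor_neg_two]
  rw [ncard_setOf_mul_sq_add_eq_zero lead_ne_zero, if_neg one_ne_zero]

theorem sum_ncard_oddFactor_pred (hn : 1 < n) :
    ∑ y ∈ rootTraces K (n - 1), {x | oddFactor n x y = 0}.ncard + (if 3 ∣ n - 1 then 1 else 0) =
      2 * ((n - 2) / 2) := by
  classical
  have : NeZero (n - 1) := ⟨by omega⟩
  have fiber (y : K) (hy : y ∈ rootTraces K (n - 1)) :
      {x | oddFactor n x y = 0}.ncard + (if y = -1 then 1 else 0) = 2 := by
    simp only [oddFactor_of_mem_rootTraces_pred hn _ hy]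
    rw [ncard_setOf_mul_sq_add_eq_zero one_ne_zero, neg_eq_zero]
    simp only [add_eq_zero_iff_eq_neg]
    split_ifs <;> rfl
  calc
    _ = ∑ y ∈ rootTraces K (n - 1),
          ({x | oddFactor n x y = 0}.ncard + if y = -1 then 1 else 0) := by
      rw [Finset.sum_add_distrib, Finset.sum_ite_eq']
      simp only [neg_one_mem_rootTraces_iff]
    _ = 2 * ((n - 2) / 2) := by
      rw [Finset.sum_congr rfl fiber, Finset.sum_const, card_rootTraces, smul_eq_mul, mul_comm,
        Nat.sub_sub]

theorem sum_ncard_oddFactor_succ :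
    ∑ y ∈ rootTraces K (n + 1), {x | oddFactor n x y = 0}.ncard +
      (if 6 ∣ n + 1 then 2 else 0) + (if 5 ∣ n + 1 then 2 else 0) = 2 * (n / 2) := by
  classical
  have fiber (y : K) (hy : y ∈ rootTraces K (n + 1)) :
      {x | oddFactor n x y = 0}.ncard + (if y = 1 then 2 else 0) +
        (if y ^ 2 + y - 1 = 0 then 1 else 0) = 2 := by
    simp only [oddFactor_of_mem_rootTraces_succ _ hy]
    by_cases h1 : y = 1
    · simp [h1]
    · rw [ncard_setOf_mul_sq_add_eq_zero (sub_ne_zero.2 (Ne.symm h1)), if_neg h1]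
      split_ifs <;> rfl
  calc
    _ = ∑ y ∈ rootTraces K (n + 1), ({x | oddFactor n x y = 0}.ncard +
          (if y = 1 then 2 else 0) + if y ^ 2 + y - 1 = 0 then 1 else 0) := by
      rw [Finset.sum_add_distrib, Finset.sum_add_distrib, Finset.sum_ite_eq',
        ← Finset.card_filter, card_filter_sq_add_self_sub_one_rootTraces]
      simp only [one_mem_rootTraces_iff]
    _ = 2 * (n / 2) := by
      rw [Finset.sum_congr rfl fiber, Finset.sum_const, card_rootTraces, smul_eq_mul, mul_comm,
        Nat.add_sub_cancel]

theorem twist_odd_fiberedness_card_general (hn : 1 < n) :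
    {p : K × K | p.2 ≠ 2 ∧ (Chebyshev.C K n).eval p.2 = p.2 ∧ oddFactor n p.1 p.2 = 0}.Finite ∧
    {p : K × K | p.2 ≠ 2 ∧ (Chebyshev.C K n).eval p.2 = p.2 ∧ oddFactor n p.1 p.2 = 0}.ncard =
      2 * n - 2 - (if n % 3 = 1 then 1 else 0) - (if n % 6 = 5 then 2 else 0) -
        (if n % 5 = 4 then 2 else 0) := by
  simp only [← and_assoc, ← mem_chebyshevFixedPoints hn]
  obtain ⟨hfin, hcard⟩ := finite_and_ncard_setOf_snd_mem_and_fst_mem (chebyshevFixedPoints K n)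
    (fun y => {x | oddFactor n x y = 0}) fun y hy => finite_setOf_oddFactor_eq_zero hn hy
  refine ⟨hfin, hcard.trans ?_⟩
  rw [sum_chebyshevFixedPoints hn, ncard_setOf_oddFactor_neg_two (zero_lt_one.trans hn)]
  have hpred := sum_ncard_oddFactor_pred (K := K) hn
  have hsucc := sum_ncard_oddFactor_succ (K := K) (n := n)
  grind

end Counting

/-- For an integer `n > 1`, define
`R_odd x y = -(y+1)*S (n-1) y ^ 2 + S (n-2) y ^ 2 + 2*S (n-1) y*S (n-2) y
  + x²*S (n-1) y*(S (n-1) y - S (n-2) y)`.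
Then the set of `(x, y) ∈ ℂ²` with `y ≠ 2`, `T n y = y` and `R_odd x y = 0`
is finite and has exactly `2n - 2 - cₙ - dₙ - eₙ` elements, where `cₙ = 1` if
`n ≡ 1 (mod 3)` and `cₙ = 0` otherwise, `dₙ = 2` if `n ≡ 5 (mod 6)` and
`dₙ = 0` otherwise, and `eₙ = 2` if `n ≡ 4 (mod 5)` and `eₙ = 0` otherwise.
Here `S` and `T` are the Chebyshev-like polynomial families with `S 0 = 1`,
`S 1 = z`, `T 0 = 2`, `T 1 = z` and the common recurrence
`f (j+1) = z * f j - f (j-1)`. -/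
theorem twist_odd_fiberedness_card
    (S T : ℤ → ℂ → ℂ)
    (hS0 : ∀ z : ℂ, S 0 z = 1)
    (hS1 : ∀ z : ℂ, S 1 z = z)
    (hSrec : ∀ (j : ℤ) (z : ℂ), S (j + 1) z = z * S j z - S (j - 1) z)
    (hT0 : ∀ z : ℂ, T 0 z = 2)
    (hT1 : ∀ z : ℂ, T 1 z = z)
    (hTrec : ∀ (j : ℤ) (z : ℂ), T (j + 1) z = z * T j z - T (j - 1) z)
    (n : ℕ) (hn : 1 < n)
    (Rodd : ℂ → ℂ → ℂ)
    (hRodd : ∀ x y : ℂ, Rodd x y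
        = -((y + 1) * S ((n : ℤ) - 1) y ^ 2) + S ((n : ℤ) - 2) y ^ 2
          + 2 * S ((n : ℤ) - 1) y * S ((n : ℤ) - 2) y
          + x ^ 2 * S ((n : ℤ) - 1) y * (S ((n : ℤ) - 1) y - S ((n : ℤ) - 2) y))
    (c d e : ℕ)
    (hc : c = if n % 3 = 1 then 1 else 0)
    (hd : d = if n % 6 = 5 then 2 else 0)
    (he : e = if n % 5 = 4 then 2 else 0) :
    Set.Finite {p : ℂ × ℂ | p.2 ≠ 2 ∧ T (n : ℤ) p.2 = p.2 ∧ Rodd p.1 p.2 = 0} ∧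
    Set.ncard {p : ℂ × ℂ | p.2 ≠ 2 ∧ T (n : ℤ) p.2 = p.2 ∧ Rodd p.1 p.2 = 0}
      = 2 * n - 2 - c - d - e := by
  have hS (j : ℤ) (z : ℂ) : S j z = (Chebyshev.S ℂ j).eval z :=
    eq_eval_S_of_recurrence (f := (S · z)) (hSrec · z) (hS0 z) (hS1 z) j
  have hT (j : ℤ) (z : ℂ) : T j z = (Chebyshev.C ℂ j).eval z :=
    eq_eval_C_of_recurrence (f := (T · z)) (hTrec · z) (hT0 z) (hT1 z) j
  have hR (x y : ℂ) : Rodd x y = oddFactor n x y := by rw [hRodd, oddFactor, hS, hS]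
  simpa only [hR, hT, hc, hd, he] using twist_odd_fiberedness_card_general hn
end
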